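/- arXiv:2309.03850 — 2 statements merged into one kernel-verified Lean document; each statement's English description precedes it below -/
import Mathlib

section
/- Let f : V → ℂ, let v ∈ V_+ (so v has q_+ + 1 neighbors), and let n ≥ 1. Then M_1(M_n f)(v) = (1/(q_-+1))·M_{n−1} f(v) + (q_- /(q_-+1))·M_{n+1} f(v). -/
open scoped BigOperators ComplexOrder

/-- A semi-homogeneous tree `T_{q_+,q_-}`: a connected acyclic simple graph with a
parity function `eps` (true = `+`, false = `−`) that flips across edges, in which every
vertex of parity `+` has exactly `qp + 1` neighbors and every vertex of parity `−` has
exactly `qm + 1` neighbors.  Spheres are finite (this follows from local finiteness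
and connectedness, and is recorded as a field for convenience). -/
structure SemiHomTree (qp qm : ℕ) (V : Type) where
  G : SimpleGraph V
  connected : G.Connected
  acyclic : G.IsAcyclic
  eps : V → Bool
  adj_parity : ∀ ⦃v w : V⦄, G.Adj v w → eps w = !eps v
  nbr_finite : ∀ v : V, {w : V | G.Adj v w}.Finite
  degree_plus : ∀ v : V, eps v = true → {w : V | G.Adj v w}.ncard = qp + 1
  degree_minus : ∀ v : V, eps v = false → {w : V | G.Adj v w}.ncard = qm + 1
  sphere_finite : ∀ (v : V) (n : ℕ), {w : V | G.dist v w = n}.Finite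

/-- The averaging operator `M_n`: average of `f` over the sphere of radius `n` around `v`. -/
noncomputable def Mop {qp qm : ℕ} {V : Type} (T : SemiHomTree qp qm V)
    (n : ℕ) (f : V → ℂ) (v : V) : ℂ :=
  (({w : V | T.G.dist v w = n}.ncard : ℂ))⁻¹ * ∑ᶠ w ∈ {w : V | T.G.dist v w = n}, f w

/-- The Laplace operator `μ₁`: the average of `f` over the neighbors of `v`. -/
noncomputable def lap {qp qm : ℕ} {V : Type} (T : SemiHomTree qp qm V)
    (f : V → ℂ) (v : V) : ℂ :=
  (((if T.eps v then qp else qm : ℕ) : ℂ) + 1)⁻¹ * ∑ᶠ w ∈ {w : V | T.G.Adj v w}, f w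

namespace SemiHomTree

variable {qp qm : ℕ} {V : Type} (T : SemiHomTree qp qm V)

/-- The sphere as a finset. -/
noncomputable def S (v : V) (n : ℕ) : Finset V := (T.sphere_finite v n).toFinset

/-- Branching number for a parity. -/
def br (qp qm : ℕ) (b : Bool) : ℕ := if b then qp else qm

theorem mem_S {v w : V} {n : ℕ} : w ∈ T.S v n ↔ T.G.dist v w = n := by
  simp [S]

theorem mem_S_one {v w : V} : w ∈ T.S v 1 ↔ T.G.Adj v w := by
  rw [mem_S, SimpleGraph.dist_eq_one_iff_adj]

theorem Mop_eq (n : ℕ) (f : V → ℂ) (v : V) :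
    Mop T n f v = ((T.S v n).card : ℂ)⁻¹ * ∑ w ∈ T.S v n, f w := by
  unfold Mop S
  rw [Set.ncard_eq_toFinset_card _ (T.sphere_finite v n),
    finsum_mem_eq_finite_toFinset_sum _ (T.sphere_finite v n)]

theorem card_one (v : V) : (T.S v 1).card = br qp qm (T.eps v) + 1 := by
  have h : {w : V | T.G.Adj v w} = {w : V | T.G.dist v w = 1} := by
    ext w; simp [SimpleGraph.dist_eq_one_iff_adj]
  unfold S
  rw [← Set.ncard_eq_toFinset_card _ (T.sphere_finite v 1), ← h]
  cases he : T.eps v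
  · simpa [br] using T.degree_minus v he
  · simpa [br] using T.degree_plus v he

theorem key {v u : V} {m : ℕ} (h : T.G.dist v u = m + 1) :
    ∃ w, T.G.Adj v w ∧ T.G.dist w u = m ∧
      ∀ w', T.G.Adj v w' → w' ≠ w → T.G.dist w' u = m + 2 := by
  have htree : T.G.IsTree := ⟨T.connected, T.acyclic⟩
  obtain ⟨p, hp, hl⟩ := T.connected.exists_path_of_dist v u
  cases p with
  | nil => simp at h
  | @cons _ w _ ha p =>
    simp only [SimpleGraph.Walk.length_cons] at hl
    have h1 := SimpleGraph.dist_le p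
    have hd : ∀ w', T.G.Adj v w' → T.G.dist w' u = m ∨ T.G.dist w' u = m + 2 := by
      intro w' ha'
      have := htree.dist_eq_dist_add_one_of_adj u ha'
      rw [SimpleGraph.dist_comm (v := v), SimpleGraph.dist_comm (v := w')] at this
      omega
    refine ⟨w, ha, ?_, ?_⟩
    · rcases hd w ha with h2 | h2 <;> omega
    · intro w' ha' hne
      rcases hd w' ha' with h2 | h2
      · exfalso
        obtain ⟨p', hl'⟩ := T.connected.exists_walk_length_eq_dist w' u
        have hp' : (SimpleGraph.Walk.cons ha' p').IsPath := by
          apply SimpleGraph.Walk.isPath_of_length_eq_dist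
          simp only [SimpleGraph.Walk.length_cons]
          omega
        have := T.acyclic.path_unique ⟨_, hp⟩ ⟨_, hp'⟩
        have h3 := congrArg Subtype.val this
        simp only [SimpleGraph.Walk.cons.injEq] at h3
        exact hne h3.1.symm
      · exact h2

open Classical in
theorem near {v u : V} {m : ℕ} (h : T.G.dist v u = m + 1) :
    ((T.S v 1).filter (fun w => T.G.dist w u = m)).card = 1 := by
  obtain ⟨w, ha, hw, hall⟩ := T.key h
  rw [Finset.card_eq_one]
  refine ⟨w, ?_⟩
  ext x
  simp only [Finset.mem_filter, mem_S_one, Finset.mem_singleton]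
  constructor
  · rintro ⟨hx, hxd⟩
    by_contra hne
    have := hall x hx hne
    omega
  · rintro rfl
    exact ⟨ha, hw⟩

open Classical in
theorem far {v u : V} {m : ℕ} (h : T.G.dist v u = m + 1) :
    ((T.S v 1).filter (fun w => T.G.dist w u = m + 2)).card = br qp qm (T.eps v) := by
  obtain ⟨w, ha, hw, hall⟩ := T.key h
  have : (T.S v 1).filter (fun w => T.G.dist w u = m + 2) = (T.S v 1).erase w := by
    ext x
    simp only [Finset.mem_filter, mem_S_one, Finset.mem_erase]
    constructor
    · rintro ⟨hx, hxd⟩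
      refine ⟨?_, hx⟩
      rintro rfl
      omega
    · rintro ⟨hne, hx⟩
      exact ⟨hx, hall x hx hne⟩
  rw [this, Finset.card_erase_of_mem (T.mem_S_one.2 ha), card_one]
  simp

theorem parity (n : ℕ) : ∀ v u : V, T.G.dist v u = n → T.eps u = (n.bodd ^^ T.eps v) := by
  induction n with
  | zero =>
    intro v u h
    have := (T.connected.dist_eq_zero_iff).1 h
    simp [this]
  | succ n ih =>
    intro v u h
    obtain ⟨w, ha, hw, -⟩ := T.key h
    rw [ih w u hw, T.adj_parity ha]
    simp

open Classical in
theorem card_succ (v : V) (m : ℕ) :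
    (T.S v (m + 2)).card = br qp qm ((m + 1).bodd ^^ T.eps v) * (T.S v (m + 1)).card := by
  have hc : ∑ u ∈ T.S v (m + 1), ∑ u' ∈ (T.S u 1).filter (fun w => T.G.dist w v = m + 2), 1
      = ∑ u' ∈ T.S v (m + 2), ∑ u ∈ (T.S u' 1).filter (fun w => T.G.dist w v = m + 1), 1 := by
    apply Finset.sum_comm'
    intro x y
    simp only [Finset.mem_filter, mem_S, SimpleGraph.dist_comm (v := v)]
    rw [SimpleGraph.dist_comm (u := x) (v := y)]
    tauto
  have h1 : ∀ u ∈ T.S v (m + 1),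
      ∑ u' ∈ (T.S u 1).filter (fun w => T.G.dist w v = m + 2), 1
        = br qp qm ((m + 1).bodd ^^ T.eps v) := by
    intro u hu
    rw [mem_S] at hu
    rw [← T.parity _ _ _ hu, ← T.far (u := v) (m := m) (by rw [SimpleGraph.dist_comm]; exact hu),
      Finset.card_eq_sum_ones]
  have h2 : ∀ u ∈ T.S v (m + 2),
      ∑ u' ∈ (T.S u 1).filter (fun w => T.G.dist w v = m + 1), 1 = 1 := by
    intro u hu
    rw [mem_S] at hu
    rw [← Finset.card_eq_sum_ones]
    exact T.near (by rw [SimpleGraph.dist_comm]; exact hu)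
  rw [Finset.sum_congr rfl h1, Finset.sum_congr rfl h2] at hc
  simp only [Finset.sum_const, smul_eq_mul, mul_one] at hc
  rw [← hc, mul_comm]

theorem I1 {v w : V} (hv : T.eps v = true) (ha : T.G.Adj v w) (n : ℕ) :
    (qm + 1) * (T.S v (n + 2)).card = qm * (qp + 1) * (T.S w (n + 1)).card := by
  have hw := T.adj_parity ha
  induction n with
  | zero =>
    rw [T.card_succ v 0, T.card_one, T.card_one, hw, hv]
    simp [br]; ring
  | succ n ih =>
    rw [T.card_succ v (n + 1), T.card_succ w n, hw, hv]
    rw [mul_left_comm, ih]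
    simp
    ring

theorem I2 {v w : V} (hv : T.eps v = true) (ha : T.G.Adj v w) (n : ℕ) :
    qp * (qm + 1) * (T.S v (n + 1)).card = (qp + 1) * (T.S w (n + 2)).card := by
  have hw := T.adj_parity ha
  induction n with
  | zero =>
    rw [T.card_succ w 0, T.card_one, T.card_one, hw, hv]
    simp [br]; ring
  | succ n ih =>
    rw [T.card_succ v n, T.card_succ w (n + 1), hw, hv]
    rw [mul_left_comm, ih]
    simp
    ring

theorem card_pos (hqp : 2 ≤ qp) (hqm : 2 ≤ qm) (v : V) (n : ℕ) :
    0 < (T.S v (n + 1)).card := by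
  have hb : ∀ b, 0 < br qp qm b := by
    intro b; cases b <;> simp [br] <;> omega
  induction n with
  | zero => rw [T.card_one]; omega
  | succ n ih => rw [T.card_succ]; exact Nat.mul_pos (hb _) ih

theorem card_zero (v : V) : T.S v 0 = {v} := by
  ext w
  rw [mem_S, T.connected.dist_eq_zero_iff, Finset.mem_singleton, eq_comm]

open Classical in
theorem sum_eq (f : V → ℂ) (v : V) (n : ℕ) (c : ℕ)
    (hc : ∀ u ∈ T.S v n, ((T.S v 1).filter (fun w => T.G.dist w u = n + 1)).card = c) :
    ∑ w ∈ T.S v 1, ∑ u ∈ T.S w (n + 1), f u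
      = c * ∑ u ∈ T.S v n, f u + ∑ u ∈ T.S v (n + 2), f u := by
  have htree : T.G.IsTree := ⟨T.connected, T.acyclic⟩
  have hdis : Disjoint (T.S v n) (T.S v (n + 2)) := by
    rw [Finset.disjoint_left]
    intro a h1 h2
    rw [mem_S] at h1 h2
    omega
  have h : ∑ w ∈ T.S v 1, ∑ u ∈ T.S w (n + 1), f u
      = ∑ u ∈ T.S v n ∪ T.S v (n + 2),
        ∑ w ∈ (T.S v 1).filter (fun w => T.G.dist w u = n + 1), f u := by
    apply Finset.sum_comm'
    intro w u
    simp only [Finset.mem_filter, mem_S, Finset.mem_union]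
    constructor
    · rintro ⟨ha, hd⟩
      have := htree.dist_eq_dist_add_one_of_adj u (SimpleGraph.dist_eq_one_iff_adj.1 ha)
      rw [SimpleGraph.dist_comm (v := v), SimpleGraph.dist_comm (v := w)] at this
      refine ⟨⟨ha, hd⟩, ?_⟩
      omega
    · tauto
  rw [h, Finset.sum_union hdis, Finset.mul_sum]
  congr 1
  · refine Finset.sum_congr rfl fun u hu => ?_
    rw [Finset.sum_const, hc u hu, nsmul_eq_mul]
  · refine Finset.sum_congr rfl fun u hu => ?_
    rw [Finset.sum_const, T.near (T.mem_S.1 hu), one_smul]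

end SemiHomTree

theorem stmt_8 {qp qm : ℕ} (hqp : 2 ≤ qp) (hqm : 2 ≤ qm) {V : Type}
    (T : SemiHomTree qp qm V) (v0 : V) (hv0 : T.eps v0 = true)
    (f : V → ℂ) (v : V) (hv : T.eps v = true) (n : ℕ) (hn : 1 ≤ n) :
    Mop T 1 (fun u => Mop T n f u) v =
      ((qm : ℂ) + 1)⁻¹ * Mop T (n - 1) f v +
        ((qm : ℂ) / ((qm : ℂ) + 1)) * Mop T (n + 1) f v := by
  classical
  obtain ⟨n, rfl⟩ : ∃ k, n = k + 1 := ⟨n - 1, by omega⟩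
  simp only [T.Mop_eq, Nat.add_sub_cancel]
  have hc1 : (T.S v 1).card = qp + 1 := by rw [T.card_one, hv]; simp [SemiHomTree.br]
  obtain ⟨w0, hw0⟩ : (T.S v 1).Nonempty := by
    rw [← Finset.card_pos]; omega
  rw [T.mem_S_one] at hw0
  have hm0 : (qm : ℂ) ≠ 0 := by exact_mod_cast (by omega : qm ≠ 0)
  have hp0 : (qp : ℂ) ≠ 0 := by exact_mod_cast (by omega : qp ≠ 0)
  have hm1 : (qm : ℂ) + 1 ≠ 0 := by exact_mod_cast (by omega : qm + 1 ≠ 0)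
  have hp1 : (qp : ℂ) + 1 ≠ 0 := by exact_mod_cast (by omega : qp + 1 ≠ 0)
  have hcard : ∀ w ∈ T.S v 1, (T.S w (n + 1)).card = (T.S w0 (n + 1)).card := by
    intro w hw
    have h1 := T.I1 hv (T.mem_S_one.1 hw) n
    rw [T.I1 hv hw0 n] at h1
    exact (Nat.eq_of_mul_eq_mul_left (by positivity) h1).symm
  have hpos := T.card_pos hqp hqm w0 n
  have hpos2 := T.card_pos hqp hqm v (n + 1)
  have hB : ((T.S w0 (n + 1)).card : ℂ) ≠ 0 := by exact_mod_cast hpos.ne'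
  have hC : ((T.S v (n + 2)).card : ℂ) ≠ 0 := by exact_mod_cast hpos2.ne'
  have hI1 : ((qm : ℂ) + 1) * (T.S v (n + 2)).card = qm * (qp + 1) * (T.S w0 (n + 1)).card := by
    exact_mod_cast T.I1 hv hw0 n
  have hL : ∑ w ∈ T.S v 1, (((T.S w (n + 1)).card : ℂ)⁻¹ * ∑ u ∈ T.S w (n + 1), f u)
      = ((T.S w0 (n + 1)).card : ℂ)⁻¹ * ∑ w ∈ T.S v 1, ∑ u ∈ T.S w (n + 1), f u := by
    rw [Finset.mul_sum]
    refine Finset.sum_congr rfl fun w hw => ?_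
    rw [hcard w hw]
  rw [hL, hc1]
  -- the multiplicity of the inner sphere
  obtain ⟨c, hc, hA⟩ : ∃ c : ℕ,
      (∀ u ∈ T.S v n, ((T.S v 1).filter (fun w => T.G.dist w u = n + 1)).card = c) ∧
      c * (qm + 1) * (T.S v n).card = (qp + 1) * (T.S w0 (n + 1)).card ∧
        0 < (T.S v n).card := by
    cases n with
    | zero =>
      refine ⟨qp + 1, ?_, ?_, ?_⟩
      · intro u hu
        rw [T.card_zero, Finset.mem_singleton] at hu
        subst hu
        rw [← hc1]
        congr 1
        apply Finset.filter_true_of_mem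
        intro w hw
        rw [SimpleGraph.dist_comm]
        exact T.mem_S.1 hw
      · rw [T.card_zero, T.card_one, T.adj_parity hw0, hv]
        simp [SemiHomTree.br]
      · rw [T.card_zero]; simp
    | succ k =>
      refine ⟨qp, ?_, T.I2 hv hw0 k, T.card_pos hqp hqm v k⟩
      intro u hu
      rw [T.far (T.mem_S.1 hu), hv]
      simp [SemiHomTree.br]
  rw [T.sum_eq f v n c hc]
  have hD : ((T.S v n).card : ℂ) ≠ 0 := by exact_mod_cast hA.2.ne'
  have hA1 : (c : ℂ) * (qm + 1) * (T.S v n).card = (qp + 1) * (T.S w0 (n + 1)).card := by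
    exact_mod_cast hA.1
  have e1 : ((qp : ℂ) + 1)⁻¹ * ((T.S w0 (n + 1)).card : ℂ)⁻¹ * c
      = ((qm : ℂ) + 1)⁻¹ * ((T.S v n).card : ℂ)⁻¹ := by
    field_simp
    linear_combination hA1
  have e2 : ((qp : ℂ) + 1)⁻¹ * ((T.S w0 (n + 1)).card : ℂ)⁻¹
      = (qm : ℂ) / ((qm : ℂ) + 1) * ((T.S v (n + 2)).card : ℂ)⁻¹ := by
    field_simp
    linear_combination hI1
  push_cast
  linear_combination (∑ u ∈ T.S v n, f u) * e1 + (∑ u ∈ T.S v (n + 2), f u) * e2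
end

section
/- Let f : V → ℂ, let v ∈ V_+ (so v has q_+ + 1 neighbors), and let n ≥ 1. Then M_2(M_{2n} f)(v) = (1/((q_+val+1)·q_-))·( M_{2n−2} f(v) + (q_- − 1)·M_{2n} f(v) + q_+·q_-·M_{2n+2} f(v) ), where q_+val = q_+, i.e. M_2(M_{2n} f)(v) = (1/((q_++1)q_-))·( M_{2n−2} f(v) + (q_-−1)·M_{2n} f(v) + q_+ q_-·M_{2n+2} f(v) ). -/
open scoped BigOperators ComplexOrder

namespace SemiHomTree

variable {qp qm : ℕ} {V : Type}

/-- The sphere as a finset. -/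
noncomputable def sph (T : SemiHomTree qp qm V) (v : V) (n : ℕ) : Finset V :=
  (T.sphere_finite v n).toFinset

/-- Sum over the sphere. -/
noncomputable def ssum (T : SemiHomTree qp qm V) (n : ℕ) (f : V → ℂ) (v : V) : ℂ :=
  ∑ w ∈ T.sph v n, f w

theorem mem_sph (T : SemiHomTree qp qm V) (v w : V) (n : ℕ) :
    w ∈ T.sph v n ↔ T.G.dist v w = n := by
  simp [sph]

theorem mop_eq (T : SemiHomTree qp qm V) (n : ℕ) (f : V → ℂ) (v : V) :
    Mop T n f v = ((T.sph v n).card : ℂ)⁻¹ * T.ssum n f v := by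
  unfold Mop ssum sph
  rw [finsum_mem_eq_finite_toFinset_sum _ (T.sphere_finite v n),
    Set.ncard_eq_toFinset_card _ (T.sphere_finite v n)]

theorem eps_walk (T : SemiHomTree qp qm V) {u w : V} (p : T.G.Walk u w) :
    (T.eps u = T.eps w) ↔ Even p.length := by
  induction p with
  | nil => simp
  | cons h p ih =>
    have := T.adj_parity h
    rw [SimpleGraph.Walk.length_cons, Nat.even_add_one, ← ih, this]
    grind

theorem eps_dist (T : SemiHomTree qp qm V) (u w : V) :
    (T.eps u = T.eps w) ↔ Even (T.G.dist u w) := by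
  obtain ⟨p, hp⟩ := T.connected.exists_walk_length_eq_dist u w
  rw [← hp]; exact T.eps_walk p

theorem dist_adj (T : SemiHomTree qp qm V) {u v : V} (h : T.G.Adj v u) (w : V) :
    T.G.dist u w = T.G.dist v w + 1 ∨ T.G.dist u w + 1 = T.G.dist v w := by
  have h1 := T.connected.dist_triangle (u := u) (v := v) (w := w)
  have h2 := T.connected.dist_triangle (u := v) (v := u) (w := w)
  have h3 : T.G.dist v u = 1 := SimpleGraph.dist_eq_one_iff_adj.2 h
  have h4 : T.G.dist u v = 1 := SimpleGraph.dist_eq_one_iff_adj.2 h.symm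
  have h5 : T.G.dist u w ≠ T.G.dist v w := by
    intro he
    have a := T.eps_dist u w
    have b := T.eps_dist v w
    rw [he] at a
    have := T.adj_parity h
    grind
  omega

theorem toward_unique (T : SemiHomTree qp qm V) {u₁ u₂ v w : V} (h₁ : T.G.Adj v u₁)
    (h₂ : T.G.Adj v u₂) (d₁ : T.G.dist u₁ w + 1 = T.G.dist v w)
    (d₂ : T.G.dist u₂ w + 1 = T.G.dist v w) : u₁ = u₂ := by
  obtain ⟨p₁, hp₁⟩ := T.connected.exists_walk_length_eq_dist u₁ w
  obtain ⟨p₂, hp₂⟩ := T.connected.exists_walk_length_eq_dist u₂ w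
  have e₁ : (SimpleGraph.Walk.cons h₁ p₁).IsPath :=
    SimpleGraph.Walk.isPath_of_length_eq_dist _ (by simp [hp₁, d₁])
  have e₂ : (SimpleGraph.Walk.cons h₂ p₂).IsPath :=
    SimpleGraph.Walk.isPath_of_length_eq_dist _ (by simp [hp₂, d₂])
  have := (T.acyclic.subsingleton_path v w).elim ⟨_, e₁⟩ ⟨_, e₂⟩
  have h := congrArg (fun p : T.G.Path v w => p.1.snd) this
  simpa using h

theorem toward_exists (T : SemiHomTree qp qm V) {v w : V} {k : ℕ} (h : T.G.dist v w = k + 1) :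
    ∃ u, T.G.Adj v u ∧ T.G.dist u w = k := by
  obtain ⟨p, hp⟩ := T.connected.exists_walk_length_eq_dist v w
  cases p with
  | nil => simp at h
  | cons ha p =>
    refine ⟨_, ha, ?_⟩
    have := SimpleGraph.dist_le p
    have := T.dist_adj ha w
    simp at hp
    omega

theorem mem_sph_one (T : SemiHomTree qp qm V) (v w : V) :
    w ∈ T.sph v 1 ↔ T.G.Adj v w := by
  rw [mem_sph, SimpleGraph.dist_eq_one_iff_adj]

open Classical in
theorem card_toward (T : SemiHomTree qp qm V) {v w : V} {k : ℕ} (h : T.G.dist v w = k + 1) :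
    ((T.sph v 1).filter (fun u => T.G.dist u w = k)).card = 1 := by
  obtain ⟨u, hu, hd⟩ := T.toward_exists h
  rw [Finset.card_eq_one]
  refine ⟨u, ?_⟩
  ext x
  simp only [Finset.mem_filter, mem_sph_one, Finset.mem_singleton]
  constructor
  · rintro ⟨hx, hxd⟩
    exact T.toward_unique (w := w) hx hu (by omega) (by omega)
  · rintro rfl
    exact ⟨hu, hd⟩

open Classical in
theorem card_away (T : SemiHomTree qp qm V) {v w : V} {k : ℕ} (h : T.G.dist v w = k) :
    ((T.sph v 1).filter (fun u => T.G.dist u w = k + 1)).card + (if k = 0 then 0 else 1)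
      = (T.sph v 1).card := by
  rcases k with _ | k
  · simp only [if_true, add_zero]
    congr 1
    rw [Finset.filter_eq_self]
    intro u hu
    rw [mem_sph_one] at hu
    have := T.dist_adj hu w
    omega
  · have e := T.card_toward h
    rw [if_neg (Nat.succ_ne_zero k),
      ← Finset.card_filter_add_card_filter_not (s := T.sph v 1) (fun u => T.G.dist u w = k + 1 + 1)]
    congr 1
    refine e.symm.trans ?_
    congr 1
    apply Finset.filter_congr
    intro u hu
    rw [mem_sph_one] at hu
    have := T.dist_adj hu w
    omega

theorem nsum (T : SemiHomTree qp qm V) (m : ℕ) (f : V → ℂ) (v : V) :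
    T.ssum 1 (T.ssum (m + 1) f) v = T.ssum (m + 2) f v
      + (((T.sph v 1).card : ℂ) - (if m = 0 then 0 else 1)) * T.ssum m f v := by
  classical
  have hd : Disjoint (T.sph v (m + 2)) (T.sph v m) := by
    rw [Finset.disjoint_left]
    intro a ha hb
    rw [mem_sph] at ha hb
    omega
  have h1 : ∀ u ∈ T.sph v 1, T.ssum (m + 1) f u =
      ∑ w ∈ T.sph v (m + 2) ∪ T.sph v m, if T.G.dist u w = m + 1 then f w else 0 := by
    intro u hu
    rw [mem_sph_one] at hu
    rw [← Finset.sum_filter]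
    unfold ssum
    apply Finset.sum_congr _ (fun _ _ => rfl)
    ext w
    simp only [Finset.mem_filter, Finset.mem_union, mem_sph]
    have := T.dist_adj hu w
    omega
  unfold ssum at h1 ⊢
  rw [Finset.sum_congr rfl h1, Finset.sum_comm, Finset.sum_union hd, Finset.mul_sum]
  congr 1
  · apply Finset.sum_congr rfl
    intro w hw
    rw [mem_sph] at hw
    rw [← Finset.sum_filter, Finset.sum_const, T.card_toward hw, one_smul]
  · apply Finset.sum_congr rfl
    intro w hw
    rw [mem_sph] at hw
    rw [← Finset.sum_filter, Finset.sum_const, ← T.card_away hw, nsmul_eq_mul]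
    split_ifs <;> simp

theorem ssum_zero (T : SemiHomTree qp qm V) (f : V → ℂ) (v : V) : T.ssum 0 f v = f v := by
  have : T.sph v 0 = {v} := by
    ext w
    rw [mem_sph, T.connected.dist_eq_zero_iff, Finset.mem_singleton, eq_comm]
  simp [ssum, this]

theorem card_plus (T : SemiHomTree qp qm V) {v : V} (h : T.eps v = true) :
    (T.sph v 1).card = qp + 1 := by
  rw [← T.degree_plus v h, Set.ncard_eq_toFinset_card _ (T.nbr_finite v)]
  congr 1
  ext w
  simp [mem_sph_one]

theorem card_minus (T : SemiHomTree qp qm V) {v : V} (h : T.eps v = false) :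
    (T.sph v 1).card = qm + 1 := by
  rw [← T.degree_minus v h, Set.ncard_eq_toFinset_card _ (T.nbr_finite v)]
  congr 1
  ext w
  simp [mem_sph_one]

theorem ssum_congr (T : SemiHomTree qp qm V) (n : ℕ) {f g : V → ℂ} {v : V}
    (h : ∀ u, T.G.dist v u = n → f u = g u) : T.ssum n f v = T.ssum n g v :=
  Finset.sum_congr rfl (fun u hu => h u ((T.mem_sph _ _ _).1 hu))

theorem ssum_lin (T : SemiHomTree qp qm V) (n : ℕ) (f g : V → ℂ) (c : ℂ) (v : V) :
    T.ssum n (fun u => f u + c * g u) v = T.ssum n f v + c * T.ssum n g v := by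
  simp [ssum, Finset.sum_add_distrib, Finset.mul_sum]

theorem two_step (T : SemiHomTree qp qm V) (f : V → ℂ) {v : V} (hv : T.eps v = true) (k : ℕ) :
    T.ssum 2 (T.ssum (2 * k + 2) f) v = T.ssum (2 * k + 4) f v
      + ((qm : ℂ) - 1) * T.ssum (2 * k + 2) f v
      + qm * ((qp : ℂ) + (if k = 0 then 1 else 0)) * T.ssum (2 * k) f v := by
  have a := T.nsum 0 (T.ssum (2 * k + 2) f) v
  have hu : T.ssum 1 (T.ssum 1 (T.ssum (2 * k + 2) f)) v =
      T.ssum 1 (fun u => T.ssum (2 * k + 3) f u + qm * T.ssum (2 * k + 1) f u) v := by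
    apply T.ssum_congr
    intro u hu
    have had := SimpleGraph.dist_eq_one_iff_adj.1 hu
    have he : T.eps u = false := by rw [T.adj_parity had, hv]; rfl
    rw [T.nsum (2 * k + 1) f u, T.card_minus he]
    simp
  have b := T.nsum (2 * k + 2) f v
  have c := T.nsum (2 * k) f v
  rw [ssum_lin] at hu
  rw [T.card_plus hv] at a b c
  rw [ssum_zero] at a
  simp only [zero_add] at a
  rw [hu] at a
  erw [b, c] at a
  rcases k with _ | k
  · simp at a ⊢
    linear_combination -a
  · simp at a ⊢
    linear_combination -a

theorem ssum_one (T : SemiHomTree qp qm V) (n : ℕ) (v : V) :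
    T.ssum n (fun _ => 1) v = (T.sph v n).card := by
  simp [ssum]

theorem eps_even (T : SemiHomTree qp qm V) {v u : V} (hv : T.eps v = true)
    (h : T.G.dist v u = 2) : T.eps u = true := by
  rw [← hv]
  exact ((T.eps_dist v u).2 (by rw [h]; decide)).symm

theorem card_two (T : SemiHomTree qp qm V) {v : V} (hv : T.eps v = true) :
    T.ssum 2 (fun _ => 1) v = ((qp : ℂ) + 1) * qm := by
  have a := T.nsum 0 (fun _ => 1) v
  have hu : T.ssum 1 (T.ssum 1 (fun _ => 1)) v = T.ssum 1 (fun u => 0 + ((qm : ℂ) + 1) * 1) v := by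
    apply T.ssum_congr
    intro u hu
    have had := SimpleGraph.dist_eq_one_iff_adj.1 hu
    have he : T.eps u = false := by rw [T.adj_parity had, hv]; rfl
    rw [ssum_one, T.card_minus he]
    simp
  rw [ssum_lin, ssum_one _ 1 v, T.card_plus hv] at hu
  rw [T.card_plus hv, ssum_zero] at a
  simp only [zero_add] at a
  rw [hu] at a
  simp [ssum] at a ⊢
  linear_combination -a

theorem card_even (T : SemiHomTree qp qm V) (k : ℕ) : ∀ v : V, T.eps v = true →
    T.ssum (2 * k + 2) (fun _ => 1) v = ((qp : ℂ) + 1) * qm * (qp * qm) ^ k := by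
  induction k using Nat.strong_induction_on with
  | _ k ih =>
    intro v hv
    rcases k with _ | k
    · simpa using T.card_two hv
    · have a := T.two_step (fun _ => 1) hv k
      have h : T.ssum 2 (T.ssum (2 * k + 2) (fun _ => 1)) v =
          T.ssum 2 (fun _ => 0 + (((qp : ℂ) + 1) * qm * (qp * qm) ^ k) * 1) v := by
        apply T.ssum_congr
        intro u hu
        rw [ih k (by omega) u (T.eps_even hv hu)]
        ring
      rw [ssum_lin, T.card_two hv] at h
      rw [h, ih k (by omega) v hv] at a
      rw [show 2 * (k + 1) + 2 = 2 * k + 4 by ring]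
      have z : T.ssum 2 (fun _ => 0) v = 0 := by simp [ssum]
      rw [z] at a
      rcases k with _ | k
      · have o : T.ssum (2 * 0) (fun _ => 1) v = 1 := T.ssum_zero _ _
        rw [o] at a
        simp at a ⊢
        linear_combination -a
      · have o := ih k (by omega) v hv
        rw [show 2 * (k + 1) = 2 * k + 2 by ring, o] at a
        rw [show 2 * (k + 1) + 4 = 2 * k + 2 + 4 by ring]
        simp only [Nat.add_eq_zero_iff, one_ne_zero, and_false, if_false] at a
        linear_combination -a

end SemiHomTree

theorem stmt_9 {qp qm : ℕ} (hqp : 2 ≤ qp) (hqm : 2 ≤ qm) {V : Type}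
    (T : SemiHomTree qp qm V) (v0 : V) (hv0 : T.eps v0 = true)
    (f : V → ℂ) (v : V) (hv : T.eps v = true) (n : ℕ) (hn : 1 ≤ n) :
    Mop T 2 (fun u => Mop T (2 * n) f u) v =
      (((qp : ℂ) + 1) * (qm : ℂ))⁻¹ *
        (Mop T (2 * n - 2) f v + ((qm : ℂ) - 1) * Mop T (2 * n) f v +
          (qp : ℂ) * (qm : ℂ) * Mop T (2 * n + 2) f v) := by
  obtain ⟨k, rfl⟩ : ∃ k, n = k + 1 := ⟨n - 1, by omega⟩
  have hp : (qp : ℂ) ≠ 0 := by norm_cast; omega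
  have hp1 : (qp : ℂ) + 1 ≠ 0 := by norm_cast
  have hm : (qm : ℂ) ≠ 0 := by norm_cast; omega
  have hu : T.ssum 2 (fun u => Mop T (2 * (k + 1)) f u) v =
      T.ssum 2 (fun u => 0 + (((qp : ℂ) + 1) * qm * (qp * qm) ^ k)⁻¹ * T.ssum (2 * k + 2) f u) v := by
    apply T.ssum_congr
    intro u hu
    rw [T.mop_eq, ← T.ssum_one, show 2 * (k + 1) = 2 * k + 2 by ring,
      T.card_even k u (T.eps_even hv hu)]
    ring
  have z : T.ssum 2 (fun _ => 0) v = 0 := by simp [SemiHomTree.ssum]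
  rw [T.ssum_lin, z, T.two_step f hv k] at hu
  rw [T.mop_eq 2, hu, T.mop_eq (2 * (k + 1) - 2), T.mop_eq (2 * (k + 1)), T.mop_eq (2 * (k + 1) + 2)]
  simp only [← T.ssum_one]
  rw [show 2 * (k + 1) + 2 = 2 * k + 4 by ring, show 2 * (k + 1) - 2 = 2 * k by omega,
    show 2 * (k + 1) = 2 * k + 2 by ring, T.card_two hv, T.card_even k v hv]
  have h4 := T.card_even (k + 1) v hv
  rw [show 2 * (k + 1) + 2 = 2 * k + 4 by ring] at h4
  rw [h4]
  rcases k with _ | k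
  · have o : T.ssum (2 * 0) (fun _ => 1) v = 1 := T.ssum_zero _ _
    rw [o]
    simp only [if_true, pow_zero, zero_add, pow_one]
    field_simp
    ring
  · have o := T.card_even k v hv
    rw [show 2 * (k + 1) = 2 * k + 2 by ring, o]
    simp only [Nat.add_eq_zero_iff, one_ne_zero, and_false, if_false]
    field_simp
    ring
end
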